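/- Each of the eight linear maps ξ_1,...,ξ_8 : ℝ² → V is a generic linear residual point of the root system of type F4; they lie in pairwise distinct W0-orbits (as generic linear residual points), and every generic linear residual point of F4 is W0-conjugate to exactly one of them. Moreover the regular parameter sets are: K^reg_{ξ1} = {(k1,k2) : (2k1+3k2)(3k1+4k2)(3k1+5k2)(5k1+6k2) ≠ 0}, K^reg_{ξ2} = {(k1² − 36k2²)·k2 ≠ 0}, K^reg_{ξ3} = {(3k1+2k2)(k1+3k2)(2k1+3k2)(3k1+4k2) ≠ 0}, K^reg_{ξ4} = {(2k1−3k2)(3k1−4k2)(3k1−5k2)(5k1−6k2) ≠ 0}, K^reg_{ξ5} = {(9k1² − 4k2²)(k1² − 9k2²) ≠ 0}, K^reg_{ξ6} = {(3k1−2k2)(k1−3k2)(2k1−3k2)(3k1−4k2) ≠ 0}, K^reg_{ξ7} = {(9k1² − k2²)·k1 ≠ 0}, and K^reg_{ξ8} = {k1·k2 ≠ 0}. -/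

import Mathlib

open Classical

noncomputable section

namespace F4Res

/-- standard coordinate functional `e_i`, encoded as a coefficient vector -/
def ee (i : Fin 4) : Fin 4 → ℝ := fun t => if t = i then 1 else 0

/-- evaluation of a linear functional (given by its coefficient vector) at a point -/
def eval (α ξ : Fin 4 → ℝ) : ℝ := ∑ t, α t * ξ t

/-- the root system of type `F4` in `ℝ⁴`:  the long roots `±e_i ± e_j` (`i < j`) and the
short roots `±e_i` and `(±e_1 ± e_2 ± e_3 ± e_4)/2` -/
def roots : Set (Fin 4 → ℝ) :=
  {α | (∃ i j : Fin 4, i < j ∧ ∃ ε₁ ε₂ : ℝ, (ε₁ = 1 ∨ ε₁ = -1) ∧ (ε₂ = 1 ∨ ε₂ = -1) ∧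
          α = ε₁ • ee i + ε₂ • ee j) ∨
       (∃ i : Fin 4, ∃ ε : ℝ, (ε = 1 ∨ ε = -1) ∧ α = ε • ee i) ∨
       (∃ ε : Fin 4 → ℝ, (∀ t, ε t = 1 ∨ ε t = -1) ∧ α = fun t => ε t / 2)}

/-- the short roots are the roots of squared length `1` -/
def isShort (α : Fin 4 → ℝ) : Prop := ∑ t, α t ^ 2 = 1

/-- the parameter function with value `k1` on the long roots and `k2` on the short
roots -/
def par (k1 k2 : ℝ) (α : Fin 4 → ℝ) : ℝ := if isShort α then k2 else k1

/-- `ξ` is a linear `(F4,(k1,k2))`-residual point -/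
def IsResidual (k1 k2 : ℝ) (ξ : Fin 4 → ℝ) : Prop :=
  {α ∈ roots | eval α ξ = par k1 k2 α}.ncard = {α ∈ roots | eval α ξ = 0}.ncard + 4

/-- a linear map `ξ : ℝ² → ℝ⁴` is a generic linear residual point of type `F4` -/
def IsGenericResidual (ξ : (ℝ × ℝ) →ₗ[ℝ] (Fin 4 → ℝ)) : Prop :=
  ∃ U : Set (ℝ × ℝ), IsOpen U ∧ Dense U ∧ ∀ k ∈ U, IsResidual k.1 k.2 (ξ k)

/-- the orthogonal reflection of `ℝ⁴` in the hyperplane perpendicular to `α` -/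
def reflectBy (α : Fin 4 → ℝ) : (Fin 4 → ℝ) → (Fin 4 → ℝ) :=
  fun v => v - (2 * eval α v / eval α α) • α

/-- `f` belongs to the Weyl group `W0` of `F4`, i.e. `f` is a composition of
reflections in the roots -/
def InWeyl (f : (Fin 4 → ℝ) → (Fin 4 → ℝ)) : Prop :=
  ∃ L : List (Fin 4 → ℝ), (∀ α ∈ L, α ∈ roots) ∧
    f = L.foldr (fun α g => reflectBy α ∘ g) id

/-- two generic linear residual points lie in the same `W0`-orbit (for the action of
`W0` by postcomposition) -/
def GenSameOrbit (ξ η : (ℝ × ℝ) →ₗ[ℝ] (Fin 4 → ℝ)) : Prop :=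
  ∃ f, InWeyl f ∧ ∀ k, η k = f (ξ k)

/-- a basis of simple roots `(α1,α2,α3,α4)` of `F4` with `α1,α2` long, `α3,α4` short
and `α2(α3∨) = −2`:  `α1 = e2−e3`, `α2 = e3−e4`, `α3 = e4`,
`α4 = (e1−e2−e3−e4)/2` -/
def simple : Fin 4 → (Fin 4 → ℝ) :=
  ![![0, 1, -1, 0], ![0, 0, 1, -1], ![0, 0, 0, 1], ![1/2, -1/2, -1/2, -1/2]]

/-- the vectors of values `(α1(ξ_i),...,α4(ξ_i))` of the eight generic linear residual
points `ξ_1,...,ξ_8` of `F4` -/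
def vals : Fin 8 → (ℝ × ℝ) → (Fin 4 → ℝ) :=
  ![fun k => ![k.1, k.1, k.2, k.2],
    fun k => ![k.1, k.1, k.2 - k.1, k.2],
    fun k => ![k.1, k.1, k.2 - k.1, k.1],
    fun k => ![k.1, k.1, k.2 - 2 * k.1, k.2],
    fun k => ![k.1, k.1, k.2 - 2 * k.1, 2 * k.1],
    fun k => ![k.1, k.1, k.2 - 2 * k.1, k.1],
    fun k => ![k.1, k.1, k.2 - 2 * k.1, -2 * k.2],
    fun k => ![0, k.1, 0, k.2 - k.1]]

/-- the regular parameter conditions defining `K^reg_{ξ_1},...,K^reg_{ξ_8}` -/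
def regCond : Fin 8 → ℝ → ℝ → Prop :=
  ![fun k1 k2 => (2*k1 + 3*k2) * (3*k1 + 4*k2) * (3*k1 + 5*k2) * (5*k1 + 6*k2) ≠ 0,
    fun k1 k2 => (k1 ^ 2 - 36 * k2 ^ 2) * k2 ≠ 0,
    fun k1 k2 => (3*k1 + 2*k2) * (k1 + 3*k2) * (2*k1 + 3*k2) * (3*k1 + 4*k2) ≠ 0,
    fun k1 k2 => (2*k1 - 3*k2) * (3*k1 - 4*k2) * (3*k1 - 5*k2) * (5*k1 - 6*k2) ≠ 0,
    fun k1 k2 => (9 * k1 ^ 2 - 4 * k2 ^ 2) * (k1 ^ 2 - 9 * k2 ^ 2) ≠ 0,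
    fun k1 k2 => (3*k1 - 2*k2) * (k1 - 3*k2) * (2*k1 - 3*k2) * (3*k1 - 4*k2) ≠ 0,
    fun k1 k2 => (9 * k1 ^ 2 - k2 ^ 2) * k1 ≠ 0,
    fun k1 k2 => k1 * k2 ≠ 0]

/-!
A real point can be moved into the dominant chamber by the Weyl group, so every generic residual
point is conjugate to a `ξ` for which `ξ (1, 10)` is dominant. Then no negative root takes
the value prescribed by the parameter function, and the count of roots becomes: the number of
positive roots taking their prescribed value exceeds twice the number of positive roots vanishing
identically by four. These are linear equations for the coordinates of `ξ`, which are forms in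
`(k₁, k₂)`. Eliminating one coordinate after the other, with a bound on the number of equations that
can still hold, leaves only eight points that are dominant at `(1, 10)`.

Whether a given `ξ` is residual at `k` depends only on which of finitely many forms vanish at `k`.
In the plane this vanishing pattern is that of the origin, of a point on one of the lines where a
form vanishes, or of a point on none of these lines, so that the regular sets can be found from
finitely many integral parameters. The eight given maps are therefore generic residual points, and
they lie in different orbits because their regular sets differ. As all of them are conjugate to some
of the eight points found by the elimination, counting shows that they represent all orbits.
-/

section Preliminaries

theorem countP_decide_congr {α : Type*} {p q : α → Prop} [DecidablePred p] [DecidablePred q]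
    {l : List α} (h : ∀ a ∈ l, p a ↔ q a) :
    l.countP (fun a => p a) = l.countP fun a => q a :=
  List.countP_congr fun a ha => by simpa using h a ha

theorem exists_suffix_of_countP_ne_zero {α : Type*} {p : α → Bool} {l : List α}
    (hl : l.countP p ≠ 0) :
    ∃ a t, a :: t <:+ l ∧ p a = true ∧ (a :: t).countP p = l.countP p := by
  induction l with
  | nil => simp at hl
  | cons b l ih =>
    by_cases hb : p b = true
    · exact ⟨b, l, List.suffix_rfl, hb, rfl⟩
    · rw [List.countP_cons_of_neg hb] at hl ⊢
      obtain ⟨a, t, ht, ha, hcount⟩ := ih hl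
      exact ⟨a, t, ht.trans (List.suffix_cons b l), ha, hcount⟩

theorem existsUnique_rel_of_forall_exists_rel {X ι : Type*} [Finite ι] {r : X → X → Prop}
    (hr : Equivalence r) {S : Set X} {ξ δ : ι → X} (hξ : ∀ i, ξ i ∈ S)
    (hne : ∀ i j, i ≠ j → ¬r (ξ i) (ξ j)) (hδ : ∀ x ∈ S, ∃ j, r x (δ j)) {x : X} (hx : x ∈ S) :
    ∃! i, r (ξ i) x := by
  choose f hf using fun i => hδ (ξ i) (hξ i)
  have hinj : Function.Injective f := fun i j hij => by
    by_contra h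
    exact hne i j h (hr.trans (hf i) (hij ▸ hr.symm (hf j)))
  obtain ⟨j, hj⟩ := hδ x hx
  obtain ⟨i, rfl⟩ := Finite.injective_iff_surjective.1 hinj j
  have hix := hr.trans (hf i) (hr.symm hj)
  refine ⟨i, hix, fun i' hi' => ?_⟩
  by_contra h
  exact hne i' i h (hr.trans hi' (hr.symm hix))

theorem apply_eq_zero_iff_apply_perp_eq_zero {R : Type*} [CommRing R] [IsDomain R] {l k : R × R}
    (hl : l ≠ 0) (hk : k ≠ 0) (hlk : l.1 * k.1 + l.2 * k.2 = 0) (f : R × R) :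
    f.1 * k.1 + f.2 * k.2 = 0 ↔ f.1 * -l.2 + f.2 * l.1 = 0 := by
  constructor <;> intro h
  · rcases not_and_or.1 (mt Prod.ext_iff.2 hk) with hk | hk <;>
      refine (mul_eq_zero.1 ?_).resolve_left hk
    · linear_combination f.2 * hlk - l.2 * h
    · linear_combination l.1 * h - f.1 * hlk
  · rcases not_and_or.1 (mt Prod.ext_iff.2 hl) with hl | hl <;>
      refine (mul_eq_zero.1 ?_).resolve_left hl
    · linear_combination f.1 * hlk + k.2 * h
    · linear_combination f.2 * hlk - k.1 * h

theorem isOpen_and_dense_setOf_forall_ne_zero {E : Type*} [NormedAddCommGroup E]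
    [NormedSpace ℝ E] [FiniteDimensional ℝ E] {S : Set (Module.Dual ℝ E)} (hS : S.Finite)
    (h0 : 0 ∉ S) : IsOpen {k | ∀ φ ∈ S, φ k ≠ 0} ∧ Dense {k | ∀ φ ∈ S, φ k ≠ 0} := by
  have hopen (φ) (_ : φ ∈ S) : IsOpen {k | φ k ≠ 0} :=
    isOpen_ne_fun φ.continuous_of_finiteDimensional continuous_const
  have hdense (φ) (hφ : φ ∈ S) : Dense {k | φ k ≠ 0} :=
    (dense_compl_singleton (0 : ℝ)).preimage (φ.isOpenMap_of_finiteDimensional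
      (LinearMap.surjective (ne_of_mem_of_not_mem hφ h0)))
  have : CompleteSpace E := FiniteDimensional.complete ℝ E
  simp only [Set.ofPred_forall]
  exact ⟨hS.isOpen_biInter hopen, dense_biInter_of_isOpen hopen hS.countable hdense⟩

theorem exists_mem_forall_apply_eq_zero_iff {E : Type*} [NormedAddCommGroup E]
    [NormedSpace ℝ E] [FiniteDimensional ℝ E] {S : Set (Module.Dual ℝ E)} (hS : S.Finite)
    {U : Set E} (hU : IsOpen U) (hne : U.Nonempty) : ∃ k ∈ U, ∀ φ ∈ S, φ k = 0 ↔ φ = 0 := by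
  obtain ⟨k, hkU, hk⟩ := (isOpen_and_dense_setOf_forall_ne_zero (S := S \ {0}) hS.sdiff
    (by simp)).2.inter_open_nonempty U hU hne
  refine ⟨k, hkU, fun φ hφ => ⟨fun h => ?_, fun h => by rw [h, LinearMap.zero_apply]⟩⟩
  by_contra hne
  exact hk φ ⟨hφ, hne⟩ h

end Preliminaries

section Elimination

/-- The sum `∑ cᵢ xᵢ` over the common indices of two lists. -/
def dot {M : Type*} [AddCommGroup M] (c : List ℤ) (x : List M) : M :=
  (List.zipWith (· • ·) c x).sum

theorem dot_cons {M : Type*} [AddCommGroup M] (c : List ℤ) (v : M) (x : List M) :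
    dot c (v :: x) = c.headD 0 • v + dot c.tail x := by
  cases c <;> simp [dot]

theorem dot_map {M N F : Type*} [AddCommGroup M] [AddCommGroup N] [FunLike F M N]
    [AddMonoidHomClass F M N] (κ : F) (c : List ℤ) (x : List M) :
    dot c (x.map κ) = κ (dot c x) := by
  induction x generalizing c with
  | nil => simp [dot]
  | cons v x ih => simp [dot_cons, ih]

theorem dot_eq_zero {M : Type*} [AddCommGroup M] {c : List ℤ} (hc : c.all (· = 0) = true)
    (x : List M) : dot c x = 0 := by
  induction x generalizing c with
  | nil => simp [dot]
  | cons v x ih =>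
    cases c with
    | nil => simp [dot]
    | cons a c =>
      simp only [List.all_cons, Bool.and_eq_true, decide_eq_true_eq] at hc
      rw [dot_cons, List.headD_cons, hc.1, zero_smul, zero_add, List.tail_cons, ih hc.2]

/-- The linear combination `a • c + b • d` of two lists padded with zeros to a common length. -/
def combine (a b : ℤ) : List ℤ → List ℤ → List ℤ
  | [], d => d.map (b * ·)
  | p :: c, d => (a * p + b * d.headD 0) :: combine a b c d.tail

theorem dot_map_mul {M : Type*} [AddCommGroup M] (b : ℤ) (d : List ℤ) (x : List M) :
    dot (d.map (b * ·)) x = b • dot d x := by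
  simp only [dot, List.smul_sum, List.zipWith_map_left, List.map_zipWith, mul_smul]

theorem dot_combine {M : Type*} [AddCommGroup M] (a b : ℤ) (c d : List ℤ) (x : List M) :
    dot (combine a b c d) x = a • dot c x + b • dot d x := by
  induction c generalizing d x with
  | nil => rw [combine, dot_map_mul, dot, dot, List.zipWith_nil_left, List.sum_nil, smul_zero,
      zero_add]
  | cons p c ih =>
    cases x with
    | nil => simp [dot]
    | cons v x =>
      simp only [combine, dot_cons, List.headD_cons, List.tail_cons, ih]
      module

/-- The integral vector `p` viewed as a rational one. -/
def ratPair : ℤ × ℤ →+ ℚ × ℚ :=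
  (Int.castAddHom ℚ).prodMap (Int.castAddHom ℚ)

theorem ratPair_injective : Function.Injective ratPair :=
  Prod.map_injective.2 ⟨Int.cast_injective, Int.cast_injective⟩

/-- An affine equation `∑ coeffsᵢ xᵢ = rhs` for unknowns `xᵢ` in a rational vector space in which a
copy of `ℚ²` is marked; missing coefficients are zero. -/
structure Equation where
  coeffs : List ℤ
  rhs : ℤ × ℤ

namespace Equation

variable {V : Type*} [AddCommGroup V] [Module ℚ V] {κ : ℚ × ℚ →ₗ[ℚ] V} {v : V} {x : List V}
  {r e : Equation}

/-- The list `x` solves the equation, the marked copy of `ℚ²` being given by `κ`. -/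
def Holds (κ : ℚ × ℚ →ₗ[ℚ] V) (x : List V) (e : Equation) : Prop :=
  dot e.coeffs x = κ (ratPair e.rhs)

/-- The coefficient of the first unknown. -/
def lead (e : Equation) : ℤ := e.coeffs.headD 0

/-- The equation obtained by setting the first unknown to zero. -/
def tail (e : Equation) : Equation := ⟨e.coeffs.tail, e.rhs⟩

/-- The equation in the remaining unknowns obtained from `e` by eliminating the first unknown with
the help of `r`. -/
def eliminate (r e : Equation) : Equation :=
  ⟨combine r.lead (-e.lead) e.coeffs.tail r.coeffs.tail, r.lead • e.rhs - e.lead • r.rhs⟩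

/-- The value that the equation gives to the first unknown, when the others have the values `y`. -/
def solveLead (e : Equation) (y : List (ℚ × ℚ)) : ℚ × ℚ :=
  (e.lead : ℚ)⁻¹ • (ratPair e.rhs - dot e.coeffs.tail y)

/-- No coefficient is left and the equation is satisfied. -/
def isCertain (e : Equation) : Bool := e.coeffs.all (· = 0) && e.rhs = (0, 0)

/-- The equation is not of the form `0 = rhs` with `rhs ≠ 0`. -/
def isPossible (e : Equation) : Bool := e.coeffs.any (· ≠ 0) || e.rhs = (0, 0)

theorem holds_cons : e.Holds κ (v :: x) ↔
    e.lead • v + dot e.coeffs.tail x = κ (ratPair e.rhs) := by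
  rw [Holds, dot_cons, lead]

theorem holds_tail (he : e.lead = 0) : e.tail.Holds κ x ↔ e.Holds κ (v :: x) := by
  rw [holds_cons, he, zero_smul, zero_add, Holds, tail]

theorem holds_eliminate (hr : r.lead ≠ 0) (hrx : r.Holds κ (v :: x)) :
    (r.eliminate e).Holds κ x ↔ e.Holds κ (v :: x) := by
  have hrhs : κ (ratPair (r.eliminate e).rhs) =
      r.lead • κ (ratPair e.rhs) - e.lead • κ (ratPair r.rhs) := by
    simp only [eliminate, map_sub, map_zsmul]
  have hcoeffs : dot (r.eliminate e).coeffs x =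
      r.lead • dot e.coeffs.tail x - e.lead • dot r.coeffs.tail x := by
    rw [eliminate, dot_combine, neg_smul, sub_eq_add_neg]
  have hscale : dot (r.eliminate e).coeffs x - κ (ratPair (r.eliminate e).rhs) =
      (r.lead : ℚ) • (e.lead • v + dot e.coeffs.tail x - κ (ratPair e.rhs)) := by
    rw [holds_cons] at hrx
    rw [hrhs, hcoeffs, ← hrx]
    module
  rw [holds_cons, Holds, ← sub_eq_zero, hscale, smul_eq_zero_iff_right (Int.cast_ne_zero.2 hr),
    sub_eq_zero]

theorem eq_solveLead {y : List (ℚ × ℚ)} (he : e.lead ≠ 0)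
    (hex : e.Holds κ (v :: y.map κ)) : v = κ (e.solveLead y) := by
  rw [holds_cons, dot_map, ← eq_sub_iff_add_eq, ← map_sub, ← Int.cast_smul_eq_zsmul ℚ] at hex
  rw [solveLead, map_smul, ← hex, inv_smul_smul₀ (Int.cast_ne_zero.2 he)]

theorem holds_of_isCertain (he : e.isCertain = true) : e.Holds κ x := by
  simp only [isCertain, Bool.and_eq_true, decide_eq_true_eq] at he
  rw [Holds, dot_eq_zero he.1 x, he.2, Prod.mk_zero_zero, map_zero, map_zero]

theorem isPossible_of_holds (hκ : Function.Injective κ) (hex : e.Holds κ x) :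
    e.isPossible = true := by
  simp only [isPossible, Bool.or_eq_true, decide_eq_true_eq, or_iff_not_imp_left,
    Bool.not_eq_true, List.any_eq_not_all_not]
  intro hc
  rw [Holds, dot_eq_zero (by simpa using hc) x, eq_comm, ← map_zero κ, hκ.eq_iff,
    ← map_zero ratPair] at hex
  exact ratPair_injective hex

end Equation

/-- Whether, as far as one can see from the equations without unknowns, at least `2 * z + d` of
the equations `P` may hold, `z` being the number of equations of `Z` that hold. -/
def feasible (d : ℕ) (P Z : List Equation) : Bool :=
  2 * Z.countP Equation.isCertain + d ≤ P.length

/-- A branch-and-bound test that `k` is true for all `x` of length `n` satisfying at least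
`2 * z + d` of the equations `P`, where `z` is the number of equations of `Z` satisfied by `x`.
The branches are indexed by the first equation of `P` involving the first unknown that holds; the
branch in which there is none has to be empty. -/
def forallSolutions (d : ℕ) :
    ℕ → List Equation → List Equation → (List (ℚ × ℚ) → Bool) → Bool
  | 0, P, Z, k => !feasible d P Z || k []
  | n + 1, P, Z, k =>
    (P.filter (·.lead ≠ 0)).tails.all fun
      | [] => forallSolutions d n ((P.filter (·.lead = 0)).map Equation.tail)
          ((Z.filter (·.lead = 0)).map Equation.tail) fun _ => false
      | r :: rest =>
        let P' := ((P.filter (·.lead = 0) ++ r :: rest).map r.eliminate).filter Equation.isPossible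
        !feasible d P' Z ||
          let Z' := (Z.map r.eliminate).filter Equation.isPossible
          !feasible d P' Z' || forallSolutions d n P' Z' fun y => k (r.solveLead y :: y)

section Soundness

variable {V : Type*} [AddCommGroup V] [Module ℚ V] {κ : ℚ × ℚ →ₗ[ℚ] V} {v : V} {x : List V}

/-- The number of equations of a list that hold. -/
def numHolding (κ : ℚ × ℚ →ₗ[ℚ] V) (x : List V) (L : List Equation) : ℕ :=
  L.countP fun e => e.Holds κ x

theorem feasible_of_le {d : ℕ} {P Z : List Equation} {y : List V}
    (h : 2 * numHolding κ y Z + d ≤ numHolding κ x P) : feasible d P Z = true := by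
  have hZ : Z.countP Equation.isCertain ≤ numHolding κ y Z :=
    List.countP_mono_left fun e _ he => decide_eq_true (e.holds_of_isCertain he)
  have hP : numHolding κ x P ≤ P.length := List.countP_le_length
  exact decide_eq_true (by omega)

theorem numHolding_filter_eliminate (hκ : Function.Injective κ) {r : Equation} (hr : r.lead ≠ 0)
    (hrx : r.Holds κ (v :: x)) (L : List Equation) :
    numHolding κ x ((L.map r.eliminate).filter Equation.isPossible) =
      numHolding κ (v :: x) L := by
  rw [numHolding, List.countP_filter, List.countP_map, numHolding]
  refine List.countP_congr fun e _ => ?_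
  simp only [Function.comp_apply, Bool.and_eq_true, decide_eq_true_eq,
    Equation.holds_eliminate hr hrx]
  exact and_iff_left_of_imp fun he =>
    Equation.isPossible_of_holds hκ ((Equation.holds_eliminate hr hrx).2 he)

theorem numHolding_map_tail {L : List Equation} (hL : ∀ e ∈ L, e.lead = 0) :
    numHolding κ x (L.map Equation.tail) = numHolding κ (v :: x) L := by
  rw [numHolding, List.countP_map]
  exact List.countP_congr fun e he => by simpa using Equation.holds_tail (hL e he)

theorem numHolding_eq_add (L : List Equation) :
    numHolding κ x L = numHolding κ x (L.filter (·.lead = 0)) +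
      numHolding κ x (L.filter (·.lead ≠ 0)) := by
  simp only [numHolding, decide_not]
  exact List.countP_eq_countP_filter_add L _ _

theorem exists_of_forallSolutions (hκ : Function.Injective κ) {d n : ℕ} {P Z : List Equation}
    {k : List (ℚ × ℚ) → Bool} (hx : x.length = n) (hk : forallSolutions d n P Z k = true)
    (hPZ : 2 * numHolding κ x Z + d ≤ numHolding κ x P) : ∃ y, k y = true ∧ x = y.map κ := by
  induction n generalizing x P Z k with
  | zero =>
    rw [forallSolutions, feasible_of_le hPZ] at hk
    exact ⟨[], hk, List.length_eq_zero_iff.1 hx⟩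
  | succ n ih =>
    obtain ⟨v, x, rfl⟩ := List.exists_cons_of_length_eq_add_one hx
    rw [forallSolutions, List.all_eq_true] at hk
    rw [List.length_cons, Nat.add_right_cancel_iff] at hx
    have hsplit := numHolding_eq_add (κ := κ) (x := v :: x) P
    by_cases hlead : numHolding κ (v :: x) (P.filter (·.lead ≠ 0)) = 0
    · have hsub : numHolding κ (v :: x) (Z.filter (·.lead = 0)) ≤ numHolding κ (v :: x) Z :=
        List.filter_sublist.countP_le
      obtain ⟨y, hy, -⟩ := ih hx (hk [] ((List.mem_tails _ _).2 List.nil_suffix)) (by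
        rw [numHolding_map_tail (v := v) (by simp), numHolding_map_tail (v := v) (by simp)]
        omega)
      exact absurd hy Bool.false_ne_true
    · obtain ⟨r, rest, hsuffix, hrx, hcount⟩ := exists_suffix_of_countP_ne_zero hlead
      have hr : r.lead ≠ 0 := by simpa using List.of_mem_filter (hsuffix.subset List.mem_cons_self)
      replace hrx : r.Holds κ (v :: x) := of_decide_eq_true hrx
      have hP : numHolding κ (v :: x) (P.filter (·.lead = 0) ++ r :: rest) =
          numHolding κ (v :: x) P := by
        rw [hsplit, numHolding, List.countP_append, hcount]; rfl
      rw [← hP, ← numHolding_filter_eliminate hκ hr hrx (_ ++ _)] at hPZ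
      have hbranch := hk (r :: rest) ((List.mem_tails _ _).2 hsuffix)
      dsimp only at hbranch
      rw [feasible_of_le hPZ, Bool.not_true, Bool.false_or] at hbranch
      rw [← numHolding_filter_eliminate hκ hr hrx Z] at hPZ
      rw [feasible_of_le hPZ, Bool.not_true, Bool.false_or] at hbranch
      obtain ⟨y, hy, rfl⟩ := ih hx hbranch hPZ
      exact ⟨r.solveLead y :: y, hy, by rw [List.map_cons, ← Equation.eq_solveLead hr hrx]⟩

end Soundness

end Elimination

section Coordinates

/-- The vector `w / 2`; every root has this form for an integral `w`. -/
def half (w : Fin 4 → ℤ) : Fin 4 → ℝ := fun t => w t / 2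

theorem half_injective : Function.Injective half := fun v w h =>
  funext fun t => by simpa [half] using congrFun h t

theorem half_neg (w : Fin 4 → ℤ) : half (-w) = -half w := by
  funext t
  simp [half, neg_div]

theorem half_add (v w : Fin 4 → ℤ) : half (v + w) = half v + half w := by
  funext t
  simp [half, add_div]

theorem half_single (i : Fin 4) (u : ℤ) : half (Pi.single i (2 * u)) = (u : ℝ) • ee i := by
  funext t
  by_cases h : t = i <;> simp [half, ee, h]

/-- The doubles of the positive roots, those with nonnegative coordinates in the basis `simple`. -/
def positiveDoubles : List (Fin 4 → ℤ) :=
  [![2, 2, 0, 0], ![2, 0, 2, 0], ![2, 0, 0, 2], ![2, 0, 0, 0], ![2, 0, 0, -2], ![1, 1, 1, 1],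
    ![2, 0, -2, 0], ![1, 1, 1, -1], ![2, -2, 0, 0], ![1, 1, -1, 1], ![0, 2, 2, 0], ![1, -1, 1, 1],
    ![1, 1, -1, -1], ![0, 2, 0, 2], ![1, -1, 1, -1], ![0, 0, 2, 2], ![0, 2, 0, 0], ![1, -1, -1, 1],
    ![0, 0, 2, 0], ![0, 2, 0, -2], ![1, -1, -1, -1], ![0, 0, 0, 2], ![0, 0, 2, -2], ![0, 2, -2, 0]]

/-- The doubles of all roots. -/
def rootDoubles : List (Fin 4 → ℤ) := positiveDoubles ++ positiveDoubles.map (-·)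

theorem nodup_rootDoubles : rootDoubles.Nodup := by decide +kernel

theorem long_mem_rootDoubles : ∀ i j : Fin 4, i < j → ∀ u v : ℤˣ,
    Pi.single i (2 * (u : ℤ)) + Pi.single j (2 * (v : ℤ)) ∈ rootDoubles := by
  decide +kernel

theorem short_mem_rootDoubles :
    ∀ (i : Fin 4) (u : ℤˣ), Pi.single i (2 * (u : ℤ)) ∈ rootDoubles := by
  decide +kernel

theorem signs_mem_rootDoubles :
    ∀ s : Fin 4 → ℤˣ, (fun t => (s t : ℤ)) ∈ rootDoubles := by
  decide +kernel

theorem eq_long_or_short_or_signs : ∀ w ∈ rootDoubles,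
    (∃ i j : Fin 4, i < j ∧ ∃ u v : ℤˣ,
      w = Pi.single i (2 * (u : ℤ)) + Pi.single j (2 * (v : ℤ))) ∨
    (∃ (i : Fin 4) (u : ℤˣ), w = Pi.single i (2 * (u : ℤ))) ∨
    ∃ s : Fin 4 → ℤˣ, w = fun t => (s t : ℤ) := by
  decide +kernel

theorem eq_one_or_neg_one_iff_exists_unit {ε : ℝ} :
    ε = 1 ∨ ε = -1 ↔ ∃ u : ℤˣ, ε = (u : ℤ) := by
  constructor
  · rintro (rfl | rfl)
    exacts [⟨1, by simp⟩, ⟨-1, by simp⟩]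
  · rintro ⟨u, rfl⟩
    obtain rfl | rfl := Int.units_eq_one_or u <;> simp

theorem mem_roots_iff {α : Fin 4 → ℝ} : α ∈ roots ↔ ∃ w ∈ rootDoubles, half w = α := by
  simp only [roots, Set.mem_ofPred_eq, eq_one_or_neg_one_iff_exists_unit]
  constructor
  · rintro (⟨i, j, hij, _, _, ⟨u, rfl⟩, ⟨v, rfl⟩, rfl⟩ | ⟨i, _, ⟨u, rfl⟩, rfl⟩ | ⟨ε, hε, rfl⟩)
    · exact ⟨_, long_mem_rootDoubles i j hij u v, by rw [half_add, half_single, half_single]⟩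
    · exact ⟨_, short_mem_rootDoubles i u, half_single i u⟩
    · choose s hs using hε
      exact ⟨_, signs_mem_rootDoubles s, funext fun t => by rw [half, hs]⟩
  · rintro ⟨w, hw, rfl⟩
    rcases eq_long_or_short_or_signs w hw with ⟨i, j, hij, u, v, rfl⟩ | ⟨i, u, rfl⟩ | ⟨s, rfl⟩
    · exact .inl ⟨i, j, hij, u, v, ⟨u, rfl⟩, ⟨v, rfl⟩, by rw [half_add, half_single, half_single]⟩
    · exact .inr (.inl ⟨i, u, ⟨u, rfl⟩, half_single i u⟩)
    · exact .inr (.inr ⟨fun t => (s t : ℤ), fun t => ⟨s t, rfl⟩, rfl⟩)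

theorem ncard_roots_sep (p : (Fin 4 → ℝ) → Prop) :
    {α ∈ roots | p α}.ncard = rootDoubles.countP fun w => p (half w) := by
  have hroots : {α ∈ roots | p α} = half '' ↑(rootDoubles.filter fun w => p (half w)).toFinset := by
    ext α
    simp only [Set.mem_ofPred_eq, mem_roots_iff, Set.mem_image, Finset.mem_coe, List.mem_toFinset,
      List.mem_filter, decide_eq_true_eq]
    exact ⟨fun ⟨⟨w, hw, hwα⟩, hα⟩ => ⟨w, ⟨hw, hwα ▸ hα⟩, hwα⟩,
      fun ⟨w, ⟨hw, hpw⟩, hwα⟩ => ⟨⟨w, hw, hwα⟩, hwα ▸ hpw⟩⟩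
  rw [hroots, Set.ncard_image_of_injective _ half_injective, Set.ncard_coe_finset,
    List.toFinset_card_of_nodup (nodup_rootDoubles.filter _), List.countP_eq_length_filter]

/-- The value of twice a root at a point with coordinates `x`, `w` being the double of the root. -/
def rootValue {M : Type*} [AddCommGroup M] (x : Fin 4 → M) (w : Fin 4 → ℤ) : M := ∑ t, w t • x t

theorem map_rootValue {M N F : Type*} [AddCommGroup M] [AddCommGroup N] [FunLike F M N]
    [AddMonoidHomClass F M N] (f : F) (x : Fin 4 → M) (w : Fin 4 → ℤ) :
    f (rootValue x w) = rootValue (fun t => f (x t)) w := by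
  simp only [rootValue, map_sum, map_zsmul]

theorem rootValue_neg {M : Type*} [AddCommGroup M] (x : Fin 4 → M) (w : Fin 4 → ℤ) :
    rootValue x (-w) = -rootValue x w := by
  simp [rootValue]

theorem dot_ofFn {M : Type*} [AddCommGroup M] {n : ℕ} (c : Fin n → ℤ) (x : Fin n → M) :
    dot (List.ofFn c) (List.ofFn x) = ∑ t, c t • x t := by
  induction n with
  | zero => simp [dot]
  | succ n ih => simp only [List.ofFn_succ, dot_cons, List.headD_cons, List.tail_cons, ih,
      Fin.sum_univ_succ]

theorem two_mul_eval_half (w : Fin 4 → ℤ) (x : Fin 4 → ℝ) :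
    2 * eval (half w) x = rootValue x w := by
  simp only [eval, half, rootValue, Finset.mul_sum, zsmul_eq_mul]
  exact Finset.sum_congr rfl fun t _ => by ring

/-- The doubles of the simple roots. -/
def simpleDouble : Fin 4 → Fin 4 → ℤ :=
  ![![0, 2, -2, 0], ![0, 0, 2, -2], ![0, 0, 0, 2], ![1, -1, -1, -1]]

theorem half_simpleDouble (j : Fin 4) : half (simpleDouble j) = simple j := by
  funext t
  fin_cases j <;> fin_cases t <;> simp [half, simpleDouble, simple]

/-- The coordinates of the point at which the simple roots take the values `s`. -/
def ofSimpleValues {M : Type*} [AddCommGroup M] (s : Fin 4 → M) : Fin 4 → M :=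
  ![s 0 + 2 • s 1 + 3 • s 2 + 2 • s 3, s 0 + s 1 + s 2, s 1 + s 2, s 2]

theorem map_ofSimpleValues {M N F : Type*} [AddCommGroup M] [AddCommGroup N] [FunLike F M N]
    [AddMonoidHomClass F M N] (f : F) (s : Fin 4 → M) (t : Fin 4) :
    f (ofSimpleValues s t) = ofSimpleValues (fun j => f (s j)) t := by
  fin_cases t <;> simp [ofSimpleValues]

theorem ofSimpleValues_eval_simple (x : Fin 4 → ℝ) :
    ofSimpleValues (fun j => eval (simple j) x) = x := by
  funext t
  fin_cases t <;>
    simp only [ofSimpleValues, eval, simple, Fin.sum_univ_four, nsmul_eq_mul, Matrix.cons_val,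
      Fin.zero_eta, Fin.mk_one, Fin.reduceFinMk] <;>
    push_cast <;> ring

/-- The coordinates of `w` in the basis `simple`. -/
def simpleCoeffs (w : Fin 4 → ℤ) : Fin 4 → ℤ :=
  ![w 0 + w 1, 2 * w 0 + w 1 + w 2, 3 * w 0 + w 1 + w 2 + w 3, 2 * w 0]

theorem rootValue_eq_sum_simple (x : Fin 4 → ℝ) (w : Fin 4 → ℤ) :
    rootValue x w = ∑ j, simpleCoeffs w j * eval (simple j) x := by
  simp only [rootValue, simpleCoeffs, eval, simple, Fin.sum_univ_four, zsmul_eq_mul,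
    Matrix.cons_val, Int.cast_add, Int.cast_mul, Int.cast_ofNat]
  ring

theorem simpleCoeffs_nonneg : ∀ w ∈ positiveDoubles, ∀ j, 0 ≤ simpleCoeffs w j := by
  decide +kernel

theorem rootValue_nonneg {x : Fin 4 → ℝ} (hx : ∀ j, 0 ≤ eval (simple j) x) {w : Fin 4 → ℤ}
    (hw : w ∈ positiveDoubles) : 0 ≤ rootValue x w := by
  rw [rootValue_eq_sum_simple]
  exact Finset.sum_nonneg fun j _ =>
    mul_nonneg (Int.cast_nonneg (simpleCoeffs_nonneg w hw j)) (hx j)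

end Coordinates

section WeylGroup

theorem eval_eq_dotProduct (α x : Fin 4 → ℝ) : eval α x = α ⬝ᵥ x := rfl

theorem eval_comm (α x : Fin 4 → ℝ) : eval α x = eval x α := dotProduct_comm α x

theorem eval_sub_smul (α x y : Fin 4 → ℝ) (c : ℝ) :
    eval α (x - c • y) = eval α x - c * eval α y := by
  simp only [eval_eq_dotProduct, dotProduct_sub, dotProduct_smul, smul_eq_mul]

theorem isShort_iff (α : Fin 4 → ℝ) : isShort α ↔ eval α α = 1 := by
  simp only [isShort, eval, sq]

theorem ne_zero_of_mem_roots {α : Fin 4 → ℝ} (hα : α ∈ roots) : α ≠ 0 := by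
  have zero_notMem : (0 : Fin 4 → ℤ) ∉ rootDoubles := by decide +kernel
  obtain ⟨w, hw, rfl⟩ := mem_roots_iff.1 hα
  have half_zero : half 0 = 0 := funext fun t => by simp [half]
  rw [← half_zero]
  exact half_injective.ne fun h => zero_notMem (h ▸ hw)

section Reflection

variable {α : Fin 4 → ℝ}

theorem reflectBy_self (hα : α ≠ 0) : reflectBy α α = -α := by
  have : eval α α ≠ 0 := dotProduct_self_eq_zero.not.2 hα
  rw [reflectBy, mul_div_cancel_right₀ _ this]
  module

theorem reflectBy_neg_left (x : Fin 4 → ℝ) : reflectBy (-α) x = reflectBy α x := by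
  simp only [reflectBy, eval_eq_dotProduct, neg_dotProduct, dotProduct_neg, neg_neg]
  module

theorem reflectBy_neg (x : Fin 4 → ℝ) : reflectBy α (-x) = -reflectBy α x := by
  simp only [reflectBy, eval_eq_dotProduct, dotProduct_neg]
  module

theorem eval_reflectBy (β x : Fin 4 → ℝ) : eval β (reflectBy α x) = eval (reflectBy α β) x := by
  rw [eval_comm (reflectBy α β), reflectBy, reflectBy, eval_sub_smul, eval_sub_smul, eval_comm β x,
    eval_comm β α, eval_comm x α]
  ring

theorem reflectBy_reflectBy (hα : α ≠ 0) (x : Fin 4 → ℝ) : reflectBy α (reflectBy α x) = x := by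
  have : eval α (reflectBy α x) = -eval α x := by
    rw [eval_reflectBy, reflectBy_self hα, eval_eq_dotProduct, neg_dotProduct, eval_eq_dotProduct]
  rw [reflectBy, this, reflectBy]
  module

theorem isShort_reflectBy (hα : α ≠ 0) (β : Fin 4 → ℝ) : isShort (reflectBy α β) ↔ isShort β := by
  rw [isShort_iff, isShort_iff, eval_reflectBy, reflectBy_reflectBy hα]

/-- The reflection `reflectBy` as a linear map. -/
def reflectionMap (α : Fin 4 → ℝ) : (Fin 4 → ℝ) →ₗ[ℝ] (Fin 4 → ℝ) where
  toFun := reflectBy α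
  map_add' x y := by
    simp only [reflectBy, eval_eq_dotProduct, dotProduct_add, mul_add, add_div]
    module
  map_smul' c x := by
    simp only [reflectBy, eval_eq_dotProduct, dotProduct_smul, smul_eq_mul, RingHom.id_apply,
      mul_left_comm 2 c, mul_div_assoc c]
    module

end Reflection

/-- The double of the reflection of `half w` in the hyperplane perpendicular to `half v`, as long
as the division is exact. -/
def reflectDouble (v w : Fin 4 → ℤ) : Fin 4 → ℤ := w - (2 * (v ⬝ᵥ w) / (v ⬝ᵥ v)) • v

theorem reflectBy_half {v w : Fin 4 → ℤ} (hv : v ≠ 0) (h : v ⬝ᵥ v ∣ 2 * (v ⬝ᵥ w)) :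
    reflectBy (half v) (half w) = half (reflectDouble v w) := by
  have four_mul_eval (v w : Fin 4 → ℤ) : 4 * eval (half v) (half w) = (v ⬝ᵥ w : ℤ) := by
    simp only [eval, half, dotProduct, Finset.mul_sum, Int.cast_sum, Int.cast_mul]
    exact Finset.sum_congr rfl fun t _ => by ring
  have coefficient : 2 * eval (half v) (half w) / eval (half v) (half v) =
      (2 * (v ⬝ᵥ w) / (v ⬝ᵥ v) : ℤ) := by
    rw [Int.cast_div h (Int.cast_ne_zero.2 (dotProduct_self_eq_zero.not.2 hv)), Int.cast_mul,
      ← four_mul_eval, ← four_mul_eval, mul_left_comm, Int.cast_ofNat,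
      mul_div_mul_left _ _ four_ne_zero]
  rw [reflectBy, coefficient, reflectDouble]
  funext t
  simp only [half, Pi.sub_apply, Pi.smul_apply, smul_eq_mul]
  push_cast
  ring

theorem dotProduct_self_dvd_two_mul_dotProduct :
    ∀ v ∈ positiveDoubles, ∀ w ∈ positiveDoubles, v ⬝ᵥ v ∣ 2 * (v ⬝ᵥ w) := by
  decide +kernel

theorem reflectDouble_mem_rootDoubles :
    ∀ v ∈ positiveDoubles, ∀ w ∈ positiveDoubles, reflectDouble v w ∈ rootDoubles := by
  decide +kernel

theorem reflectBy_half_of_mem {v w : Fin 4 → ℤ} (hv : v ∈ positiveDoubles)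
    (hw : w ∈ positiveDoubles) : reflectBy (half v) (half w) = half (reflectDouble v w) := by
  have ne_zero : ∀ v ∈ positiveDoubles, v ≠ 0 := by decide +kernel
  exact reflectBy_half (ne_zero v hv) (dotProduct_self_dvd_two_mul_dotProduct v hv w hw)

theorem neg_mem_roots {α : Fin 4 → ℝ} (hα : α ∈ roots) : -α ∈ roots := by
  have neg_mem : ∀ w ∈ rootDoubles, -w ∈ rootDoubles := by decide +kernel
  obtain ⟨w, hw, rfl⟩ := mem_roots_iff.1 hα
  exact mem_roots_iff.2 ⟨-w, neg_mem w hw, half_neg w⟩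

theorem exists_eq_half_or_eq_neg_half {α : Fin 4 → ℝ} (hα : α ∈ roots) :
    ∃ w ∈ positiveDoubles, α = half w ∨ α = -half w := by
  obtain ⟨w, hw, rfl⟩ := mem_roots_iff.1 hα
  rcases List.mem_append.1 hw with hw | hw
  · exact ⟨w, hw, .inl rfl⟩
  · obtain ⟨v, hv, rfl⟩ := List.mem_map.1 hw
    exact ⟨v, hv, .inr (half_neg v)⟩

theorem reflectBy_mem_roots {α β : Fin 4 → ℝ} (hα : α ∈ roots) (hβ : β ∈ roots) :
    reflectBy α β ∈ roots := by
  obtain ⟨v, hv, hvα⟩ := exists_eq_half_or_eq_neg_half hα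
  obtain ⟨w, hw, hwβ⟩ := exists_eq_half_or_eq_neg_half hβ
  have hmem : reflectBy (half v) (half w) ∈ roots :=
    mem_roots_iff.2 ⟨_, reflectDouble_mem_rootDoubles v hv w hw, (reflectBy_half_of_mem hv hw).symm⟩
  rcases hvα with rfl | rfl <;> rcases hwβ with rfl | rfl <;>
    simp only [reflectBy_neg_left, reflectBy_neg, hmem, neg_mem_roots hmem]

theorem ncard_roots_sep_comp_reflectBy {α : Fin 4 → ℝ} (hα : α ∈ roots)
    (p : (Fin 4 → ℝ) → Prop) :
    {β ∈ roots | p (reflectBy α β)}.ncard = {β ∈ roots | p β}.ncard := by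
  have hinv := reflectBy_reflectBy (ne_zero_of_mem_roots hα)
  refine Set.ncard_congr (fun β _ => reflectBy α β) ?_ ?_ ?_
  · exact fun β hβ => ⟨reflectBy_mem_roots hα hβ.1, hβ.2⟩
  · exact fun β γ _ _ h => Function.LeftInverse.injective hinv h
  · exact fun β hβ => ⟨reflectBy α β,
      ⟨reflectBy_mem_roots hα hβ.1, (hinv β).symm ▸ hβ.2⟩, hinv β⟩

theorem isResidual_reflectBy {α : Fin 4 → ℝ} (hα : α ∈ roots) (k1 k2 : ℝ) (x : Fin 4 → ℝ) :
    IsResidual k1 k2 (reflectBy α x) ↔ IsResidual k1 k2 x := by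
  have par_reflectBy (β : Fin 4 → ℝ) : par k1 k2 β = par k1 k2 (reflectBy α β) := by
    simp only [par, isShort_reflectBy (ne_zero_of_mem_roots hα)]
  simp only [IsResidual, eval_reflectBy]
  rw [← ncard_roots_sep_comp_reflectBy hα (fun β => eval β x = 0),
    ← ncard_roots_sep_comp_reflectBy hα (fun β => eval β x = par k1 k2 β)]
  simp only [← par_reflectBy]

namespace InWeyl

protected theorem id : InWeyl id := ⟨[], by simp, rfl⟩

variable {f g : (Fin 4 → ℝ) → (Fin 4 → ℝ)}

theorem reflectBy_comp {α : Fin 4 → ℝ} (hα : α ∈ roots) (hg : InWeyl g) :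
    InWeyl (reflectBy α ∘ g) := by
  obtain ⟨L, hL, rfl⟩ := hg
  exact ⟨α :: L, List.forall_mem_cons.2 ⟨hα, hL⟩, rfl⟩

@[elab_as_elim]
theorem induction_on {motive : ∀ f, InWeyl f → Prop} (hf : InWeyl f) (id : motive id .id)
    (reflectBy_comp : ∀ α (hα : α ∈ roots) g (hg : InWeyl g), motive g hg →
      motive (reflectBy α ∘ g) (hg.reflectBy_comp hα)) : motive f hf := by
  obtain ⟨L, hL, rfl⟩ := hf
  induction L with
  | nil => exact id
  | cons α L ih =>
    obtain ⟨hα, hL⟩ := List.forall_mem_cons.1 hL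
    exact reflectBy_comp α hα _ ⟨L, hL, rfl⟩ (ih hL)

protected theorem comp (hf : InWeyl f) (hg : InWeyl g) : InWeyl (f ∘ g) := by
  induction hf using InWeyl.induction_on with
  | id => exact hg
  | reflectBy_comp α hα f _ ih => exact ih.reflectBy_comp hα

protected theorem reflectBy {α : Fin 4 → ℝ} (hα : α ∈ roots) : InWeyl (reflectBy α) :=
  InWeyl.id.reflectBy_comp hα

theorem exists_leftInverse (hf : InWeyl f) : ∃ g, InWeyl g ∧ Function.LeftInverse g f := by
  induction hf using InWeyl.induction_on with
  | id => exact ⟨id, .id, fun _ => rfl⟩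
  | reflectBy_comp α hα f _ ih =>
    obtain ⟨g, hg, hgf⟩ := ih
    exact ⟨g ∘ reflectBy α, hg.comp (.reflectBy hα),
      Function.LeftInverse.comp (reflectBy_reflectBy (ne_zero_of_mem_roots hα)) hgf⟩

theorem isResidual_iff (hf : InWeyl f) {k1 k2 : ℝ} {x : Fin 4 → ℝ} :
    IsResidual k1 k2 (f x) ↔ IsResidual k1 k2 x := by
  induction hf using InWeyl.induction_on with
  | id => rfl
  | reflectBy_comp α hα f _ ih => exact (isResidual_reflectBy hα _ _ _).trans ih

theorem exists_linearMap (hf : InWeyl f) :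
    ∃ T : (Fin 4 → ℝ) →ₗ[ℝ] (Fin 4 → ℝ), ∀ x, T x = f x := by
  induction hf using InWeyl.induction_on with
  | id => exact ⟨LinearMap.id, fun _ => rfl⟩
  | reflectBy_comp α _ f _ ih =>
    obtain ⟨T, hT⟩ := ih
    exact ⟨(reflectionMap α).comp T, fun x => congrArg (reflectBy α) (hT x)⟩

end InWeyl

theorem equivalence_genSameOrbit : Equivalence GenSameOrbit where
  refl ξ := ⟨id, .id, fun _ => rfl⟩
  symm := by
    rintro ξ η ⟨f, hf, hfξ⟩
    obtain ⟨g, hg, hgf⟩ := hf.exists_leftInverse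
    exact ⟨g, hg, fun k => by rw [hfξ, hgf]⟩
  trans := by
    rintro ξ η ζ ⟨f, hf, hfξ⟩ ⟨g, hg, hgη⟩
    exact ⟨g ∘ f, hg.comp hf, fun k => by rw [hgη, hfξ, Function.comp_apply]⟩

theorem GenSameOrbit.isResidual_iff {ξ η : (ℝ × ℝ) →ₗ[ℝ] (Fin 4 → ℝ)} (h : GenSameOrbit ξ η)
    (k : ℝ × ℝ) (k1 k2 : ℝ) : IsResidual k1 k2 (η k) ↔ IsResidual k1 k2 (ξ k) := by
  obtain ⟨f, hf, hfξ⟩ := h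
  rw [hfξ, hf.isResidual_iff]

theorem GenSameOrbit.isGenericResidual {ξ η : (ℝ × ℝ) →ₗ[ℝ] (Fin 4 → ℝ)} (h : GenSameOrbit ξ η)
    (hξ : IsGenericResidual ξ) : IsGenericResidual η := by
  obtain ⟨U, hUo, hUd, hU⟩ := hξ
  exact ⟨U, hUo, hUd, fun k hk => (h.isResidual_iff k _ _).2 (hU k hk)⟩

end WeylGroup

section Dominance

theorem simpleDouble_mem_positiveDoubles : ∀ j, simpleDouble j ∈ positiveDoubles := by
  decide +kernel

theorem simple_mem_roots (j : Fin 4) : simple j ∈ roots :=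
  mem_roots_iff.2 ⟨_, List.mem_append_left _ (simpleDouble_mem_positiveDoubles j),
    half_simpleDouble j⟩

/-- The positive roots with negative value at `x`. Their number measures how far `x` is from the
dominant chamber. -/
def negativeAt (x : Fin 4 → ℝ) : Set (Fin 4 → ℝ) :=
  half '' {w | w ∈ positiveDoubles ∧ eval (half w) x < 0}

theorem finite_negativeAt (x : Fin 4 → ℝ) : (negativeAt x).Finite :=
  ((List.finite_toSet positiveDoubles).subset fun _ hw => hw.1).image half

theorem reflectDouble_simpleDouble_mem : ∀ j, ∀ w ∈ positiveDoubles, w ≠ simpleDouble j →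
    reflectDouble (simpleDouble j) w ∈ positiveDoubles ∧
      reflectDouble (simpleDouble j) w ≠ simpleDouble j := by
  decide +kernel

theorem ncard_negativeAt_reflectBy_lt {x : Fin 4 → ℝ} {j : Fin 4} (hj : eval (simple j) x < 0) :
    (negativeAt (reflectBy (simple j) x)).ncard < (negativeAt x).ncard := by
  have hsimple := ne_zero_of_mem_roots (simple_mem_roots j)
  have hmem : simple j ∈ negativeAt x := half_simpleDouble j ▸
    ⟨_, ⟨simpleDouble_mem_positiveDoubles j, (half_simpleDouble j).symm ▸ hj⟩, rfl⟩
  refine (Set.ncard_le_ncard_of_injOn (reflectBy (simple j)) ?_ ?_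
    ((finite_negativeAt x).subset Set.sdiff_subset)).trans_lt
      (Set.ncard_sdiff_singleton_lt_of_mem hmem (finite_negativeAt x))
  · rintro _ ⟨w, ⟨hw, hwx⟩, rfl⟩
    rw [eval_reflectBy] at hwx
    have hne : w ≠ simpleDouble j := by
      rintro rfl
      rw [half_simpleDouble, reflectBy_self hsimple, eval_eq_dotProduct, neg_dotProduct,
        ← eval_eq_dotProduct] at hwx
      linarith
    obtain ⟨hpos, hne'⟩ := reflectDouble_simpleDouble_mem j w hw hne
    rw [← half_simpleDouble,
      reflectBy_half_of_mem (simpleDouble_mem_positiveDoubles j) hw] at hwx ⊢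
    exact ⟨⟨_, ⟨hpos, hwx⟩, rfl⟩, half_injective.ne hne'⟩
  · exact (Function.LeftInverse.injective (reflectBy_reflectBy hsimple)).injOn

theorem exists_inWeyl_eval_simple_nonneg (x : Fin 4 → ℝ) :
    ∃ f, InWeyl f ∧ ∀ j, 0 ≤ eval (simple j) (f x) := by
  induction hn : (negativeAt x).ncard using Nat.strong_induction_on generalizing x with
  | _ n ih =>
    by_cases! hx : ∀ j, 0 ≤ eval (simple j) x
    · exact ⟨id, .id, hx⟩
    · obtain ⟨j, hj⟩ := hx
      obtain ⟨f, hf, hfx⟩ := ih _ (hn ▸ ncard_negativeAt_reflectBy_lt hj) _ rfl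
      exact ⟨f ∘ reflectBy (simple j), hf.comp (.reflectBy (simple_mem_roots j)), hfx⟩

theorem exists_genSameOrbit_eval_simple_nonneg (η : (ℝ × ℝ) →ₗ[ℝ] (Fin 4 → ℝ)) (k : ℝ × ℝ) :
    ∃ ζ, GenSameOrbit η ζ ∧ ∀ j, 0 ≤ eval (simple j) (ζ k) := by
  obtain ⟨f, hf, hfη⟩ := exists_inWeyl_eval_simple_nonneg (η k)
  obtain ⟨T, hT⟩ := hf.exists_linearMap
  exact ⟨T.comp η, ⟨f, hf, fun k => hT (η k)⟩, fun j => (hT (η k)).symm ▸ hfη j⟩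

end Dominance

section ParameterForms

/-- The linear form `p₁ k₁ + p₂ k₂` on the space of parameters `(k₁, k₂)`. -/
def form : ℚ × ℚ →ₗ[ℚ] Module.Dual ℝ (ℝ × ℝ) :=
  (LinearMap.toSpanSingleton ℚ _ (LinearMap.fst ℝ ℝ ℝ)).coprod
    (LinearMap.toSpanSingleton ℚ _ (LinearMap.snd ℝ ℝ ℝ))

theorem form_apply (p : ℚ × ℚ) (k : ℝ × ℝ) : form p k = p.1 * k.1 + p.2 * k.2 := by
  simp [form, Rat.smul_def]

theorem form_ratPair_apply (p : ℤ × ℤ) (k : ℝ × ℝ) :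
    form (ratPair p) k = p.1 * k.1 + p.2 * k.2 := by
  simp [form_apply, ratPair]

theorem form_injective : Function.Injective form := fun p q h =>
  Prod.ext (by simpa [form_apply] using LinearMap.congr_fun h (1, 0))
    (by simpa [form_apply] using LinearMap.congr_fun h (0, 1))

/-- Twice the parameter function `par` at the root with double `w`, as a form in `(k₁, k₂)`. -/
def target (w : Fin 4 → ℤ) : ℤ × ℤ := if ∑ t, w t ^ 2 = 4 then (0, 2) else (2, 0)

theorem target_neg (w : Fin 4 → ℤ) : target (-w) = target w := by
  simp [target]

theorem isShort_half (w : Fin 4 → ℤ) : isShort (half w) ↔ ∑ t, w t ^ 2 = 4 := by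
  have hsum : ∑ t, half w t ^ 2 = ((∑ t, w t ^ 2 : ℤ) : ℝ) / 4 := by
    push_cast
    rw [Finset.sum_div]
    exact Finset.sum_congr rfl fun t _ => by rw [half]; ring
  rw [isShort, hsum, div_eq_one_iff_eq (by norm_num)]
  norm_cast

theorem form_target (w : Fin 4 → ℤ) (k : ℝ × ℝ) :
    form (ratPair (target w)) k = 2 * par k.1 k.2 (half w) := by
  rw [form_ratPair_apply, par, isShort_half, target]
  split_ifs <;> simp

/-- The coordinates of `ξ k` as linear forms in `k`. -/
def coordForms (ξ : (ℝ × ℝ) →ₗ[ℝ] (Fin 4 → ℝ)) : Fin 4 → Module.Dual ℝ (ℝ × ℝ) :=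
  fun t => LinearMap.proj t ∘ₗ ξ

theorem two_mul_eval_half_apply (ξ : (ℝ × ℝ) →ₗ[ℝ] (Fin 4 → ℝ)) (w : Fin 4 → ℤ) (k : ℝ × ℝ) :
    2 * eval (half w) (ξ k) = rootValue (coordForms ξ) w k := by
  rw [two_mul_eval_half]
  exact (map_rootValue (LinearMap.applyₗ k) (coordForms ξ) w).symm

theorem isResidual_apply_iff (ξ : (ℝ × ℝ) →ₗ[ℝ] (Fin 4 → ℝ)) (k : ℝ × ℝ) :
    IsResidual k.1 k.2 (ξ k) ↔
      rootDoubles.countP (fun w => (rootValue (coordForms ξ) w - form (ratPair (target w))) k = 0) =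
        rootDoubles.countP (fun w => rootValue (coordForms ξ) w k = 0) + 4 := by
  simp only [IsResidual, ncard_roots_sep, LinearMap.sub_apply, ← two_mul_eval_half_apply,
    form_target, sub_eq_zero, mul_eq_zero, two_ne_zero, false_or,
    mul_right_inj' (two_ne_zero (α := ℝ))]

theorem IsGenericResidual.countP_eq {ξ : (ℝ × ℝ) →ₗ[ℝ] (Fin 4 → ℝ)} (hξ : IsGenericResidual ξ) :
    rootDoubles.countP (fun w => rootValue (coordForms ξ) w = form (ratPair (target w))) =
      rootDoubles.countP (fun w => rootValue (coordForms ξ) w = 0) + 4 := by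
  obtain ⟨U, hopen, hdense, hU⟩ := hξ
  obtain ⟨k, hkU, hk⟩ := exists_mem_forall_apply_eq_zero_iff
    (((List.finite_toSet rootDoubles).image fun w =>
        rootValue (coordForms ξ) w - form (ratPair (target w))).union
      ((List.finite_toSet rootDoubles).image (rootValue (coordForms ξ)))) hopen hdense.nonempty
  have hcount := (isResidual_apply_iff ξ k).1 (hU k hkU)
  rwa [countP_decide_congr fun w hw =>
      (hk _ (.inl (Set.mem_image_of_mem _ hw))).trans sub_eq_zero,
    countP_decide_congr fun w hw => hk _ (.inr (Set.mem_image_of_mem _ hw))] at hcount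

end ParameterForms

section Classification

/-- The equation satisfied by the coordinates of a point at which the root with double `w` takes
the value prescribed by the parameter function. -/
def poleEquation (w : Fin 4 → ℤ) : Equation := ⟨List.ofFn w, target w⟩

/-- The equation satisfied by the coordinates of a point at which the root with double `w`
vanishes. -/
def zeroEquation (w : Fin 4 → ℤ) : Equation := ⟨List.ofFn w, 0⟩

theorem holds_poleEquation {x : Fin 4 → Module.Dual ℝ (ℝ × ℝ)} {w : Fin 4 → ℤ} :
    (poleEquation w).Holds form (List.ofFn x) ↔ rootValue x w = form (ratPair (target w)) := by
  rw [Equation.Holds, poleEquation, dot_ofFn, rootValue]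

theorem holds_zeroEquation {x : Fin 4 → Module.Dual ℝ (ℝ × ℝ)} {w : Fin 4 → ℤ} :
    (zeroEquation w).Holds form (List.ofFn x) ↔ rootValue x w = 0 := by
  rw [Equation.Holds, zeroEquation, dot_ofFn, rootValue, map_zero, map_zero]

theorem numHolding_poleEquation {ξ : (ℝ × ℝ) →ₗ[ℝ] (Fin 4 → ℝ)} (hξ : IsGenericResidual ξ)
    (hdom : ∀ j, 0 ≤ eval (simple j) (ξ (1, 10))) :
    numHolding form (List.ofFn (coordForms ξ)) (positiveDoubles.map poleEquation) =
      2 * numHolding form (List.ofFn (coordForms ξ)) (positiveDoubles.map zeroEquation) + 4 := by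
  have hneg (w) (hw : w ∈ positiveDoubles) :
      ¬ rootValue (coordForms ξ) (-w) = form (ratPair (target (-w))) := fun h => by
    have hvalue := LinearMap.congr_fun h (1, 10)
    rw [← two_mul_eval_half_apply, two_mul_eval_half, rootValue_neg, target_neg,
      form_target] at hvalue
    have hpos := rootValue_nonneg hdom hw
    unfold par at hvalue
    split_ifs at hvalue <;> linarith
  have hP : (positiveDoubles.map (-·)).countP (fun w =>
      rootValue (coordForms ξ) w = form (ratPair (target w))) = 0 :=
    List.countP_eq_zero.2 fun v hv => by
      obtain ⟨w, hw, rfl⟩ := List.mem_map.1 hv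
      simpa using hneg w hw
  have hZ : (positiveDoubles.map (-·)).countP (fun w => rootValue (coordForms ξ) w = 0) =
      positiveDoubles.countP fun w => rootValue (coordForms ξ) w = 0 := by
    rw [List.countP_map]
    exact List.countP_congr fun w _ => by simp [rootValue_neg]
  have hcount := hξ.countP_eq
  rw [rootDoubles, List.countP_append, List.countP_append, hP, hZ] at hcount
  simp only [numHolding, List.countP_map, Function.comp_def, holds_poleEquation,
    holds_zeroEquation]
  omega

/-- The linear map `k ↦ ξ k` with `αⱼ (ξ k) = sⱼ · k` for the simple roots `αⱼ`. -/
def pointOf (s : Fin 4 → ℤ × ℤ) : (ℝ × ℝ) →ₗ[ℝ] (Fin 4 → ℝ) :=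
  LinearMap.pi fun t => form (ratPair (ofSimpleValues s t))

theorem eq_pointOf {ξ : (ℝ × ℝ) →ₗ[ℝ] (Fin 4 → ℝ)} {s : Fin 4 → ℤ × ℤ}
    (h : coordForms ξ = fun t => form (ratPair (ofSimpleValues s t))) : ξ = pointOf s :=
  LinearMap.ext fun k => funext fun t => LinearMap.congr_fun (congrFun h t) k

/-- The values `(α₁, …, α₄)` on the simple roots, as forms in `(k₁, k₂)`, of the generic residual
points that are dominant at `(1, 10)`. They are those of `vals` except for `ξ₇`, which is not
dominant there and is replaced by a conjugate. -/
def dominantValues : Fin 8 → Fin 4 → ℤ × ℤ :=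
  ![![(1, 0), (1, 0), (0, 1), (0, 1)],
    ![(1, 0), (1, 0), (-1, 1), (0, 1)],
    ![(1, 0), (1, 0), (-1, 1), (1, 0)],
    ![(1, 0), (1, 0), (-2, 1), (0, 1)],
    ![(1, 0), (1, 0), (-2, 1), (2, 0)],
    ![(1, 0), (1, 0), (-2, 1), (1, 0)],
    ![(1, 0), (1, 0), (1, 0), (-3, 1)],
    ![(0, 0), (1, 0), (0, 0), (-1, 1)]]

/-- The point with coordinate forms `y` is not dominant at `(1, 10)` or is one of the eight points
`pointOf (dominantValues j)`. -/
def isNegativeOrListed (y : List (ℚ × ℚ)) : Bool :=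
  (∃ j, (dot (List.ofFn (simpleDouble j)) y).1 + 10 * (dot (List.ofFn (simpleDouble j)) y).2 < 0) ∨
    ∃ j, y = List.ofFn fun t => ratPair (ofSimpleValues (dominantValues j) t)

set_option maxRecDepth 100000 in
theorem forallSolutions_isNegativeOrListed :
    forallSolutions 4 4 (positiveDoubles.map poleEquation) (positiveDoubles.map zeroEquation)
      isNegativeOrListed = true := by
  decide +kernel

theorem two_mul_eval_simple_apply {ζ : (ℝ × ℝ) →ₗ[ℝ] (Fin 4 → ℝ)} {y : List (ℚ × ℚ)}
    (hy : List.ofFn (coordForms ζ) = y.map form) (j : Fin 4) (k : ℝ × ℝ) :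
    2 * eval (simple j) (ζ k) = form (dot (List.ofFn (simpleDouble j)) y) k := by
  rw [← half_simpleDouble, two_mul_eval_half_apply, rootValue, ← dot_ofFn, hy, dot_map]

theorem exists_genSameOrbit_pointOf {η : (ℝ × ℝ) →ₗ[ℝ] (Fin 4 → ℝ)} (hη : IsGenericResidual η) :
    ∃ j, GenSameOrbit η (pointOf (dominantValues j)) := by
  obtain ⟨ζ, hηζ, hdom⟩ := exists_genSameOrbit_eval_simple_nonneg η (1, 10)
  obtain ⟨y, hy, hζ⟩ := exists_of_forallSolutions form_injective (List.length_ofFn)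
    forallSolutions_isNegativeOrListed
    (numHolding_poleEquation (hηζ.isGenericResidual hη) hdom).ge
  rcases of_decide_eq_true hy with ⟨j, hneg⟩ | ⟨j, rfl⟩
  · have hpos := two_mul_eval_simple_apply hζ j (1, 10)
    rw [form_apply, mul_one, mul_comm _ (10 : ℝ)] at hpos
    have := hdom j
    have : ((_ : ℚ) : ℝ) < 0 := Rat.cast_lt_zero.2 hneg
    push_cast at this
    linarith
  · rw [List.map_ofFn, List.ofFn_inj] at hζ
    exact ⟨j, eq_pointOf hζ ▸ hηζ⟩

end Classification

section RegularParameters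

/-- The values of `vals` as forms in `(k₁, k₂)`. -/
def values : Fin 8 → Fin 4 → ℤ × ℤ :=
  ![![(1, 0), (1, 0), (0, 1), (0, 1)],
    ![(1, 0), (1, 0), (-1, 1), (0, 1)],
    ![(1, 0), (1, 0), (-1, 1), (1, 0)],
    ![(1, 0), (1, 0), (-2, 1), (0, 1)],
    ![(1, 0), (1, 0), (-2, 1), (2, 0)],
    ![(1, 0), (1, 0), (-2, 1), (1, 0)],
    ![(1, 0), (1, 0), (-2, 1), (0, -2)],
    ![(0, 0), (1, 0), (0, 0), (-1, 1)]]

theorem vals_eq_form (i : Fin 8) (k : ℝ × ℝ) (j : Fin 4) :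
    vals i k j = form (ratPair (values i j)) k := by
  rw [form_ratPair_apply]
  fin_cases i <;> fin_cases j <;> simp [vals, values] <;> ring

theorem eq_pointOf_of_eval_simple {ξ : (ℝ × ℝ) →ₗ[ℝ] (Fin 4 → ℝ)} {s : Fin 4 → ℤ × ℤ}
    (h : ∀ k j, eval (simple j) (ξ k) = form (ratPair (s j)) k) : ξ = pointOf s :=
  LinearMap.ext fun k => funext fun t => calc
    ξ k t = ofSimpleValues (fun j => LinearMap.applyₗ k (form (ratPair (s j)))) t := by
      simp only [LinearMap.applyₗ_apply_apply, ← h, ofSimpleValues_eval_simple]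
    _ = pointOf s k t := by
      rw [← map_ofSimpleValues, ← map_ofSimpleValues form, ← map_ofSimpleValues ratPair]
      rfl

/-- The linear factors of the polynomials in `regCond`. -/
def factors : Fin 8 → List (ℤ × ℤ) :=
  ![[(2, 3), (3, 4), (3, 5), (5, 6)],
    [(1, 6), (1, -6), (0, 1)],
    [(3, 2), (1, 3), (2, 3), (3, 4)],
    [(2, -3), (3, -4), (3, -5), (5, -6)],
    [(3, 2), (3, -2), (1, 3), (1, -3)],
    [(3, -2), (1, -3), (2, -3), (3, -4)],
    [(3, 1), (3, -1), (1, 0)],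
    [(1, 0), (0, 1)]]

theorem regCond_iff (i : Fin 8) (k : ℝ × ℝ) :
    regCond i k.1 k.2 ↔ ∀ f ∈ factors i, form (ratPair f) k ≠ 0 := by
  have h1 : k.1 ^ 2 - 36 * k.2 ^ 2 = (k.1 + 6 * k.2) * (k.1 - 6 * k.2) := by ring
  have h2 : 9 * k.1 ^ 2 - 4 * k.2 ^ 2 = (3 * k.1 + 2 * k.2) * (3 * k.1 - 2 * k.2) := by ring
  have h3 : k.1 ^ 2 - 9 * k.2 ^ 2 = (k.1 + 3 * k.2) * (k.1 - 3 * k.2) := by ring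
  have h4 : 9 * k.1 ^ 2 - k.2 ^ 2 = (3 * k.1 + k.2) * (3 * k.1 - k.2) := by ring
  simp only [form_ratPair_apply]
  fin_cases i <;> simp [regCond, factors, h1, h2, h3, h4, ← sub_eq_add_neg, and_assoc]

/-- The value of the form `f` at the integral parameter `m`. -/
def pairing (f m : ℤ × ℤ) : ℤ := f.1 * m.1 + f.2 * m.2

theorem form_ratPair_intCast (f m : ℤ × ℤ) :
    form (ratPair f) ((m.1 : ℝ), (m.2 : ℝ)) = 0 ↔ pairing f m = 0 := by
  simp only [form_ratPair_apply, pairing]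
  norm_cast

/-- Integral parameters, at least one for each subset of `F` that can be the set of forms vanishing
at a real parameter. The point `(1, 100)` stands for the parameters at which no nonzero form of `F`
vanishes. -/
def testPoints (F : List (ℤ × ℤ)) : List (ℤ × ℤ) :=
  (0, 0) :: (1, 100) :: F.map fun f => (-f.2, f.1)

theorem exists_testPoint {F : List (ℤ × ℤ)} (hF : ∀ f ∈ F, pairing f (1, 100) = 0 → f = 0)
    (k : ℝ × ℝ) : ∃ m ∈ testPoints F, ∀ f ∈ F, form (ratPair f) k = 0 ↔ pairing f m = 0 := by
  simp only [form_ratPair_apply]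
  by_cases hk : k = 0
  · exact ⟨(0, 0), by simp [testPoints], by simp [hk, pairing]⟩
  by_cases hl : ∃ l ∈ F, l ≠ 0 ∧ (l.1 * k.1 + l.2 * k.2 : ℝ) = 0
  · obtain ⟨l, hlF, hl0, hlk⟩ := hl
    have hl0' : ((l.1 : ℝ), (l.2 : ℝ)) ≠ 0 := by simpa [Prod.ext_iff] using hl0
    refine ⟨(-l.2, l.1), List.mem_cons_of_mem _ (List.mem_cons_of_mem _
      (List.mem_map_of_mem (f := fun f => (-f.2, f.1)) hlF)), fun f _ => ?_⟩
    rw [pairing, apply_eq_zero_iff_apply_perp_eq_zero hl0' hk hlk (f.1, f.2)]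
    dsimp only
    norm_cast
  · push Not at hl
    refine ⟨(1, 100), by simp [testPoints], fun f hf => ⟨fun h => ?_, fun h => ?_⟩⟩
    · by_contra hne
      exact hl f hf (by rintro rfl; simp [pairing] at hne) h
    · simp [hF f hf h]

/-- The forms whose vanishing at `k` decides whether `pointOf s k` is residual. -/
def residualForms (s : Fin 4 → ℤ × ℤ) : List (ℤ × ℤ) :=
  rootDoubles.map (fun w => rootValue (ofSimpleValues s) w - target w) ++
    rootDoubles.map (rootValue (ofSimpleValues s))

/-- The condition `IsResidual` for `pointOf s m` at an integral parameter `m`. -/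
abbrev IsResidualAt (s : Fin 4 → ℤ × ℤ) (m : ℤ × ℤ) : Prop :=
  rootDoubles.countP (fun w => pairing (rootValue (ofSimpleValues s) w - target w) m = 0) =
    rootDoubles.countP (fun w => pairing (rootValue (ofSimpleValues s) w) m = 0) + 4

theorem rootValue_coordForms_pointOf (s : Fin 4 → ℤ × ℤ) (w : Fin 4 → ℤ) :
    rootValue (coordForms (pointOf s)) w = form (ratPair (rootValue (ofSimpleValues s) w)) := by
  rw [map_rootValue ratPair, map_rootValue form]
  rfl

theorem isResidual_pointOf_iff {s : Fin 4 → ℤ × ℤ} {k : ℝ × ℝ} {m : ℤ × ℤ}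
    (hm : ∀ f ∈ residualForms s, form (ratPair f) k = 0 ↔ pairing f m = 0) :
    IsResidual k.1 k.2 (pointOf s k) ↔ IsResidualAt s m := by
  simp only [residualForms, List.mem_append, List.mem_map, or_imp, forall_and,
    forall_exists_index, and_imp, forall_apply_eq_imp_iff₂] at hm
  simp only [isResidual_apply_iff, rootValue_coordForms_pointOf, ← map_sub]
  rw [countP_decide_congr hm.1, countP_decide_congr hm.2]

theorem residualForms_generic : ∀ i, ∀ f ∈ residualForms (values i) ++ factors i,
    pairing f (1, 100) = 0 → f = 0 := by
  decide +kernel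

theorem isResidualAt_values_iff :
    ∀ i, ∀ m ∈ testPoints (residualForms (values i) ++ factors i),
      IsResidualAt (values i) m ↔ ∀ f ∈ factors i, pairing f m ≠ 0 := by
  decide +kernel

theorem isResidual_pointOf_values_iff (i : Fin 8) (k : ℝ × ℝ) :
    IsResidual k.1 k.2 (pointOf (values i) k) ↔ ∀ f ∈ factors i, form (ratPair f) k ≠ 0 := by
  obtain ⟨m, hm, hmk⟩ := exists_testPoint (residualForms_generic i) k
  rw [isResidual_pointOf_iff fun f hf => hmk f (List.mem_append_left _ hf),
    isResidualAt_values_iff i m hm]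
  exact forall₂_congr fun f hf => not_congr (hmk f (List.mem_append_right _ hf)).symm

theorem zero_notMem_factors : ∀ i, 0 ∉ factors i := by decide +kernel

theorem isGenericResidual_pointOf_values (i : Fin 8) : IsGenericResidual (pointOf (values i)) := by
  obtain ⟨hopen, hdense⟩ := isOpen_and_dense_setOf_forall_ne_zero
    ((List.finite_toSet (factors i)).image fun f => form (ratPair f)) (by
      rintro ⟨f, hf, hf0⟩
      obtain rfl : f = 0 := ratPair_injective <| form_injective <|
        hf0.trans (by rw [map_zero, map_zero])
      exact zero_notMem_factors i hf)
  refine ⟨_, hopen, hdense, fun k hk => (isResidual_pointOf_values_iff i k).2 fun f hf => ?_⟩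
  exact hk _ (Set.mem_image_of_mem _ hf)

theorem exists_pairing_factors_not_iff : ∀ i j, i ≠ j →
    ∃ m ∈ testPoints (factors i ++ factors j),
      ¬((∀ f ∈ factors i, pairing f m ≠ 0) ↔ ∀ f ∈ factors j, pairing f m ≠ 0) := by
  decide +kernel

theorem not_genSameOrbit_pointOf_values {i j : Fin 8} (hij : i ≠ j) :
    ¬GenSameOrbit (pointOf (values i)) (pointOf (values j)) := fun h => by
  obtain ⟨m, -, hm⟩ := exists_pairing_factors_not_iff i j hij
  have hiff := h.isResidual_iff (m.1, m.2) m.1 m.2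
  simp only [isResidual_pointOf_values_iff _ ((m.1 : ℝ), (m.2 : ℝ)), Ne,
    form_ratPair_intCast] at hiff
  exact hm hiff.symm

end RegularParameters

/-- The eight linear maps `ξ_1,...,ξ_8` (determined by their values on the simple
roots) are generic linear residual points of `F4`, lie in pairwise distinct
`W0`-orbits, every generic linear residual point of `F4` is `W0`-conjugate to exactly
one of them, and their regular parameter sets `K^reg_{ξ_i}` are as listed. -/
theorem f4_generic_residual_classification
    (ξ : Fin 8 → ((ℝ × ℝ) →ₗ[ℝ] (Fin 4 → ℝ)))
    (hval : ∀ (i : Fin 8) (k : ℝ × ℝ) (j : Fin 4), eval (simple j) (ξ i k) = vals i k j) :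
    (∀ i, IsGenericResidual (ξ i)) ∧
    (∀ i j, i ≠ j → ¬ GenSameOrbit (ξ i) (ξ j)) ∧
    (∀ η : (ℝ × ℝ) →ₗ[ℝ] (Fin 4 → ℝ), IsGenericResidual η →
      ∃! i : Fin 8, GenSameOrbit (ξ i) η) ∧
    (∀ (i : Fin 8) (k1 k2 : ℝ), IsResidual k1 k2 (ξ i (k1, k2)) ↔ regCond i k1 k2) := by
  obtain rfl : ξ = fun i => pointOf (values i) := funext fun i =>
    eq_pointOf_of_eval_simple fun k j => by rw [hval, vals_eq_form]
  refine ⟨isGenericResidual_pointOf_values, fun _ _ => not_genSameOrbit_pointOf_values,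
    fun η hη => ?_, fun i k1 k2 => ?_⟩
  · exact existsUnique_rel_of_forall_exists_rel equivalence_genSameOrbit
      (S := {ξ | IsGenericResidual ξ}) isGenericResidual_pointOf_values
      (fun _ _ => not_genSameOrbit_pointOf_values) (fun _ => exists_genSameOrbit_pointOf) hη
  · rw [isResidual_pointOf_values_iff i (k1, k2), regCond_iff i (k1, k2)]

end F4Res

end
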